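/- arXiv:math/0008076 — 2 statements merged into one kernel-verified Lean document; each statement's English description precedes it below -/
import Mathlib

section
/- Let K be a CM field with CM-type Σ and complex conjugation x ↦ x̄, and let V be a rational Hodge structure of weight k of CM-type with field K. Equip K with the weight-one Hodge structure K_{-1/2} defined by (K_{-1/2})^{1,0} := ⊕_{σ∈Σ} K_σ and (K_{-1/2})^{0,1} := ⊕_{σ∈Σ̄} K_σ, and equip V ⊗_ℚ K with the tensor product Hodge structure of weight k+1. Then V'' := {w ∈ V ⊗_ℚ K : (x ⊗ 1)w = (1 ⊗ x̄)w for all x ∈ K} is a sub-Hodge structure of V ⊗_ℚ K_{-1/2}, with induced Hodge decomposition (V'')^{r,s} = (⊕_{σ∈Σ} V^{r,s-1}_σ ⊗ K_{σ̄}) ⊕ (⊕_{σ∈Σ̄} V^{r-1,s}_σ ⊗ K_{σ̄}); in particular dim_ℂ (V'')^{r,s} = dim_ℂ V^{r,s-1}_Σ + dim_ℂ V^{r-1,s}_{Σ̄}, which are the Hodge numbers of the Tate twist V_{1/2}(-1) of the half twist when the half twist is defined. -/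
/-!
Let `θ` be a primitive element of `K` over `ℚ`. Its minimal polynomial is separable with complex
roots `σ θ`, one for each embedding `σ`, so for every `K`-vector space `V` the spaces `V_σ` are
eigenspaces of the single operator `θ`, are independent, and span every `θ`-stable subspace
(`iSup_Vsig_inf`). Hence `V_ℂ ⊗ K_ℂ` is the sum of the blocks `V^{p,q}_σ ⊗ K_τ` (`iSup_block`) and
each Hodge summand of `V ⊗ K_{-1/2}` is a sum of blocks (`tensorPiece_eq`).

Since `ℂ` is flat over `ℚ`, the complexification of `V''` is the kernel of `θ ⊗ 1 - 1 ⊗ θ̄`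
(`map_baseChange_Vdoubleprime`). This operator acts on a block by `σ θ - τ θ̄`, which vanishes
exactly when `τ = σ̄`; so intersecting a sum of blocks with that kernel keeps precisely the blocks
with `τ = σ̄` (`ker_inf_biSup_eq`). This yields both the decomposition and its pieces. The
dimensions follow because each `K_τ` is one-dimensional (`finrank_Vsig_self`).
-/

open scoped TensorProduct
open Module

noncomputable section

/-- Scalar multiplication by `x : K` on `V`, as a `ℚ`-linear map. -/
def smulQ (K : Type*) [Field K] [Algebra ℚ K]
    (V : Type*) [AddCommGroup V] [Module ℚ V] [Module K V] [IsScalarTower ℚ K V]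
    (x : K) : V →ₗ[ℚ] V where
  toFun v := x • v
  map_add' := by simp
  map_smul' q v := smul_comm x q v

/-- The `ℂ`-linear extension of the action of `x : K` to the
complexification `V_ℂ = ℂ ⊗_ℚ V`. -/
def actK (K : Type*) [Field K] [Algebra ℚ K]
    (V : Type*) [AddCommGroup V] [Module ℚ V] [Module K V] [IsScalarTower ℚ K V]
    (x : K) : (ℂ ⊗[ℚ] V) →ₗ[ℂ] (ℂ ⊗[ℚ] V) :=
  LinearMap.baseChange ℂ (smulQ K V x)

/-- The eigenspace `V_σ = {v ∈ V_ℂ : x•v = σ(x)v for all x ∈ K}` attached to an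
embedding `σ : K → ℂ`. -/
def Vsig (K : Type*) [Field K] [Algebra ℚ K]
    (V : Type*) [AddCommGroup V] [Module ℚ V] [Module K V] [IsScalarTower ℚ K V]
    (σ : K →+* ℂ) : Submodule ℂ (ℂ ⊗[ℚ] V) :=
  ⨅ x : K, LinearMap.ker (actK K V x - σ x • LinearMap.id)

/-- The conjugation map `c = id_V ⊗ (complex conjugation)` on `V_ℂ = ℂ ⊗_ℚ V`,
as a `ℚ`-linear map. -/
def cmap (V : Type*) [AddCommGroup V] [Module ℚ V] :
    (ℂ ⊗[ℚ] V) →ₗ[ℚ] (ℂ ⊗[ℚ] V) :=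
  TensorProduct.map (Complex.conjAe.toLinearMap.restrictScalars ℚ) LinearMap.id

/-- `V^{p,q}_T := ⊕_{σ ∈ T} (V^{p,q} ∩ V_σ)` for a set `T` of embeddings. -/
def VpqT (K : Type*) [Field K] [Algebra ℚ K]
    (V : Type*) [AddCommGroup V] [Module ℚ V] [Module K V] [IsScalarTower ℚ K V]
    (Vpq : ℕ → ℕ → Submodule ℂ (ℂ ⊗[ℚ] V)) (T : Set (K →+* ℂ)) (p q : ℕ) :
    Submodule ℂ (ℂ ⊗[ℚ] V) :=
  ⨆ σ ∈ T, (Vpq p q ⊓ Vsig K V σ)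

/-- The weight-one Hodge structure `K_{-1/2}` attached to the CM-type `Σ`:
`(K_{-1/2})^{1,0} = ⊕_{σ∈Σ} K_σ` and `(K_{-1/2})^{0,1} = ⊕_{σ∈Σ̄} K_σ`. -/
def KnegHalf (K : Type*) [Field K] [Algebra ℚ K] (Sg : Set (K →+* ℂ)) (p q : ℕ) :
    Submodule ℂ (ℂ ⊗[ℚ] K) :=
  if p = 1 ∧ q = 0 then ⨆ σ ∈ Sg, Vsig K K σ
  else if p = 0 ∧ q = 1 then ⨆ σ ∈ {σ : K →+* ℂ | (starRingEnd ℂ).comp σ ∈ Sg}, Vsig K K σ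
  else ⊥

/-- The `(r,s)`-piece of the tensor product Hodge structure on
`V_ℂ ⊗_ℂ (K ⊗_ℚ ℂ)`:  `⊕_{p+p'=r, q+q'=s} V^{p,q} ⊗ (K_{-1/2})^{p',q'}`. -/
def tensorPiece (K : Type*) [Field K] [Algebra ℚ K]
    (V : Type*) [AddCommGroup V] [Module ℚ V] [Module K V] [IsScalarTower ℚ K V]
    (Vpq : ℕ → ℕ → Submodule ℂ (ℂ ⊗[ℚ] V)) (Sg : Set (K →+* ℂ)) (r s : ℕ) :
    Submodule ℂ ((ℂ ⊗[ℚ] V) ⊗[ℂ] (ℂ ⊗[ℚ] K)) :=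
  ⨆ (p : ℕ) (q : ℕ) (p' : ℕ) (q' : ℕ) (_ : p + p' = r) (_ : q + q' = s),
    LinearMap.range (TensorProduct.mapIncl (Vpq p q) (KnegHalf K Sg p' q'))

/-- `V'' := {w ∈ V ⊗_ℚ K : (x ⊗ 1)w = (1 ⊗ x̄)w for all x ∈ K}`. -/
def Vdoubleprime (K : Type*) [Field K] [Algebra ℚ K] (conj : K ≃ₐ[ℚ] K)
    (V : Type*) [AddCommGroup V] [Module ℚ V] [Module K V] [IsScalarTower ℚ K V] :
    Submodule ℚ (V ⊗[ℚ] K) :=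
  ⨅ x : K, LinearMap.ker
    (TensorProduct.map (smulQ K V x) LinearMap.id -
      TensorProduct.map LinearMap.id (smulQ K K (conj x)))

/-- The `(r,s)`-piece `(⊕_{σ∈Σ} V^{r,s-1}_σ ⊗ K_{σ̄}) ⊕ (⊕_{σ∈Σ̄} V^{r-1,s}_σ ⊗ K_{σ̄})`
of the induced decomposition of `V''` (a summand being `0` when `s-1 < 0` resp.
`r-1 < 0`). -/
def VdoubleprimePiece (K : Type*) [Field K] [Algebra ℚ K]
    (V : Type*) [AddCommGroup V] [Module ℚ V] [Module K V] [IsScalarTower ℚ K V]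
    (Vpq : ℕ → ℕ → Submodule ℂ (ℂ ⊗[ℚ] V)) (Sg : Set (K →+* ℂ)) (r s : ℕ) :
    Submodule ℂ ((ℂ ⊗[ℚ] V) ⊗[ℂ] (ℂ ⊗[ℚ] K)) :=
  (if s = 0 then ⊥ else
    ⨆ σ ∈ Sg, LinearMap.range
      (TensorProduct.mapIncl (Vpq r (s - 1) ⊓ Vsig K V σ)
        (Vsig K K ((starRingEnd ℂ).comp σ)))) ⊔
  (if r = 0 then ⊥ else
    ⨆ σ ∈ {σ : K →+* ℂ | (starRingEnd ℂ).comp σ ∈ Sg},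
      LinearMap.range
        (TensorProduct.mapIncl (Vpq (r - 1) s ⊓ Vsig K V σ)
          (Vsig K K ((starRingEnd ℂ).comp σ))))

/-! ### Linear algebra -/

/-- If `f` acts on each `X i` by the scalar `c i`, then the kernel of `f` cuts out of a sum of
some `X i` exactly the sum of those with `c i = 0`; the other summands lie in eigenspaces for
nonzero eigenvalues. Independence of the `X i` is not needed. -/
lemma ker_inf_biSup_eq {M ι : Type*} [AddCommGroup M] [Module ℂ M] (f : End ℂ M)
    (X : ι → Submodule ℂ M) (c : ι → ℂ) (hX : ∀ i, X i ≤ f.eigenspace (c i)) (S : Set ι) :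
    LinearMap.ker f ⊓ ⨆ i ∈ S, X i = ⨆ i ∈ {i | i ∈ S ∧ c i = 0}, X i := by
  have hsplit : ⨆ i ∈ S, X i =
      (⨆ i ∈ {i | i ∈ S ∧ c i = 0}, X i) ⊔ ⨆ i ∈ {i | i ∈ S ∧ c i ≠ 0}, X i := by
    rw [← iSup_union]
    have hS : S = {i | i ∈ S ∧ c i = 0} ∪ {i | i ∈ S ∧ c i ≠ 0} := by
      ext i
      simp only [Set.mem_union, Set.mem_ofPred_eq]; tauto
    rw [← hS]
  have hA : (⨆ i ∈ {i | i ∈ S ∧ c i = 0}, X i) ≤ LinearMap.ker f := by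
    rw [← End.eigenspace_zero]
    exact iSup₂_le fun i hi => (hX i).trans (by rw [hi.2])
  have hB : (⨆ i ∈ {i | i ∈ S ∧ c i ≠ 0}, X i) ≤ ⨆ μ ≠ (0 : ℂ), f.eigenspace μ :=
    iSup₂_le fun i hi => (hX i).trans (le_iSup₂_of_le (c i) hi.2 le_rfl)
  have hdis : Disjoint (LinearMap.ker f) (⨆ i ∈ {i | i ∈ S ∧ c i ≠ 0}, X i) := by
    rw [← End.eigenspace_zero]
    exact (f.eigenspaces_iSupIndep 0).mono_right hB
  rw [hsplit, inf_comm, sup_inf_assoc_of_le _ hA, inf_comm, hdis.eq_bot, sup_bot_eq]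

lemma finrank_iSup_of_iSupIndep {M ι : Type*} [AddCommGroup M] [Module ℂ M]
    [FiniteDimensional ℂ M] [Fintype ι] (X : ι → Submodule ℂ M) (hX : iSupIndep X) :
    finrank ℂ ↥(⨆ i, X i) = ∑ i, finrank ℂ ↥(X i) := by
  classical
  have e := LinearEquiv.ofInjective _ hX.dfinsupp_lsum_injective
  have h := e.finrank_eq
  rw [← Submodule.iSup_eq_range_dfinsupp_lsum] at h
  rw [← h]
  exact (DirectSum.linearEquivFunOnFintype ℂ ι (fun i => ↥(X i))).finrank_eq.trans
    (finrank_pi_fintype ℂ)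

lemma finrank_range_mapIncl {M N : Type*} [AddCommGroup M] [Module ℂ M]
    [AddCommGroup N] [Module ℂ N] (A : Submodule ℂ M) (B : Submodule ℂ N) :
    finrank ℂ ↥(LinearMap.range (TensorProduct.mapIncl A B)) = finrank ℂ A * finrank ℂ B := by
  rw [LinearMap.finrank_range_of_inj, finrank_tensorProduct]
  exact TensorProduct.map_injective_of_flat_flat _ _ A.injective_subtype B.injective_subtype

/-! ### Eigenspaces of the action of `K` -/

section Eigen

variable (K : Type*) [Field K] [NumberField K]
  (V : Type*) [AddCommGroup V] [Module ℚ V] [Module K V] [IsScalarTower ℚ K V]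

/-- The action of `K` on `V_ℂ` as a `ℚ`-algebra homomorphism `K → End_ℂ(V_ℂ)`. -/
def actHom : K →ₐ[ℚ] End ℂ (ℂ ⊗[ℚ] V) :=
  (End.baseChangeHom ℚ ℂ V).comp (Algebra.lsmul ℚ ℚ V)

lemma actHom_apply (x : K) : actHom K V x = actK K V x := rfl

lemma mem_Vsig {σ : K →+* ℂ} {v : ℂ ⊗[ℚ] V} :
    v ∈ Vsig K V σ ↔ ∀ x : K, actK K V x v = σ x • v := by
  simp [Vsig, sub_eq_zero]

variable {K}

lemma adjoin_eq_top_induction {θ : K} (hθ : Algebra.adjoin ℚ {θ} = ⊤)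
    {P : K → Prop} (h0 : P θ) (hq : ∀ q : ℚ, P (algebraMap ℚ K q))
    (hadd : ∀ x y, P x → P y → P (x + y)) (hmul : ∀ x y, P x → P y → P (x * y)) (x : K) : P x := by
  have hx : x ∈ Algebra.adjoin ℚ {θ} := hθ ▸ Algebra.mem_top
  induction hx using Algebra.adjoin_induction with
  | mem y hy => rw [Set.mem_singleton_iff.mp hy]; exact h0
  | algebraMap q => exact hq q
  | add y z _ _ hy hz => exact hadd y z hy hz
  | mul y z _ _ hy hz => exact hmul y z hy hz

/-- For a generator `θ` of `K` over `ℚ`, the simultaneous eigenspace `V_σ` is an eigenspace of the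
single operator `θ`. -/
lemma Vsig_eq_eigenspace {θ : K} (hθ : Algebra.adjoin ℚ {θ} = ⊤) (σ : K →+* ℂ) :
    Vsig K V σ = End.eigenspace (actK K V θ) (σ θ) := by
  ext v
  rw [mem_Vsig, End.mem_eigenspace_iff]
  refine ⟨fun h => h θ, fun h x => ?_⟩
  refine adjoin_eq_top_induction (P := fun x => actK K V x v = σ x • v) hθ h ?_ ?_ ?_ x
  · intro q
    rw [← actHom_apply, AlgHom.commutes, Module.algebraMap_end_apply, eq_ratCast, map_ratCast,
      Rat.cast_smul_eq_qsmul]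
  · intro x y hx hy
    simp only [← actHom_apply] at *
    rw [map_add, map_add, LinearMap.add_apply, hx, hy, add_smul]
  · intro x y hx hy
    simp only [← actHom_apply] at *
    rw [map_mul, map_mul, End.mul_apply, hy, map_smul, hx, smul_smul, mul_comm]

lemma embedding_injective {θ : K} (hθ : Algebra.adjoin ℚ {θ} = ⊤) :
    Function.Injective (fun σ : K →+* ℂ => σ θ) := by
  intro σ τ h
  ext x
  refine adjoin_eq_top_induction (P := fun x => σ x = τ x) hθ h ?_ ?_ ?_ x
  · simp
  · intro x y hx hy; simp [hx, hy]
  · intro x y hx hy; simp [hx, hy]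

/-- A `θ`-stable subspace of `V_ℂ` is the sum of its intersections with the `V_σ`: the minimal
polynomial of `θ` is separable, so `θ` acts semisimply on `V_ℂ`, and its eigenvalues are roots of
that polynomial, i.e. of the form `σ θ`. -/
lemma iSup_Vsig_inf [FiniteDimensional K V] {θ : K} (hθ : Algebra.adjoin ℚ {θ} = ⊤)
    (p : Submodule ℂ (ℂ ⊗[ℚ] V)) (hp : ∀ v ∈ p, actK K V θ v ∈ p) :
    p = ⨆ σ : K →+* ℂ, p ⊓ Vsig K V σ := by
  have : Module.Finite ℚ V := Module.Finite.trans K V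
  have hint : IsIntegral ℚ θ := Algebra.IsIntegral.isIntegral θ
  have haev : Polynomial.aeval (actK K V θ) ((minpoly ℚ θ).map (algebraMap ℚ ℂ)) = 0 := by
    rw [Polynomial.aeval_map_algebraMap, ← actHom_apply, Polynomial.aeval_algHom_apply,
      minpoly.aeval, map_zero]
  have hss : End.IsSemisimple (actK K V θ) :=
    End.isSemisimple_of_squarefree_aeval_eq_zero
      ((minpoly.irreducible hint).separable.map (f := algebraMap ℚ ℂ)).squarefree haev
  refine le_antisymm ?_ (iSup_le fun _ => inf_le_left)
  conv_lhs => rw [Submodule.eq_iSup_inf_genEigenspace 1 hp hss.iSup_eigenspace_eq_top]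
  refine iSup_le fun μ => ?_
  by_cases hμ : End.eigenspace (actK K V θ) μ = ⊥
  · change p ⊓ End.eigenspace (actK K V θ) μ ≤ _
    rw [hμ]; simp
  · have hroot : Polynomial.aeval μ (minpoly ℚ θ) = 0 := by
      obtain ⟨v, hv⟩ := End.HasEigenvalue.exists_hasEigenvector (f := actK K V θ) (μ := μ) hμ
      have h1 := End.aeval_apply_of_hasEigenvector
        (p := (minpoly ℚ θ).map (algebraMap ℚ ℂ)) hv
      rw [haev, LinearMap.zero_apply, eq_comm, smul_eq_zero, Polynomial.eval_map_algebraMap] at h1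
      exact h1.resolve_right hv.2
    have hr' : μ ∈ (minpoly ℚ θ).rootSet ℂ := by
      rw [Polynomial.mem_rootSet]; exact ⟨minpoly.ne_zero hint, hroot⟩
    rw [← NumberField.Embeddings.range_eval_eq_rootSet_minpoly] at hr'
    obtain ⟨σ, rfl⟩ := hr'
    refine le_iSup_of_le σ ?_
    rw [Vsig_eq_eigenspace V hθ]

lemma iSupIndep_Vsig {θ : K} (hθ : Algebra.adjoin ℚ {θ} = ⊤) :
    iSupIndep (fun σ : K →+* ℂ => Vsig K V σ) := by
  simp only [Vsig_eq_eigenspace V hθ]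
  exact (End.eigenspaces_iSupIndep _).comp (embedding_injective hθ)

lemma iSup_Vsig [FiniteDimensional K V] {θ : K} (hθ : Algebra.adjoin ℚ {θ} = ⊤) :
    ⨆ σ : K →+* ℂ, Vsig K V σ = ⊤ := by
  simpa using (iSup_Vsig_inf V hθ ⊤ (by simp)).symm


/-- The `ℂ`-algebra homomorphism `K ⊗ ℂ → ℂ` extending `σ`. -/
def evalSig (σ : K →+* ℂ) : ℂ ⊗[ℚ] K →ₐ[ℂ] ℂ :=
  Algebra.TensorProduct.lift (AlgHom.id ℂ ℂ) (RingHom.toRatAlgHom σ) (fun _ _ => Commute.all _ _)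

lemma evalSig_actK (σ : K →+* ℂ) (x : K) (v : ℂ ⊗[ℚ] K) :
    evalSig σ (actK K K x v) = σ x * evalSig σ v := by
  induction v with
  | zero => simp
  | add v w hv hw => rw [map_add, map_add, hv, hw, map_add, mul_add]
  | tmul z y =>
    simp [evalSig, actK, smulQ]
    ring

/-- Each `K_σ` is a line. It is nonzero because the functional `evalSig σ` kills every other `K_τ`
but not `1`, and there are `[K : ℚ] = dim K_ℂ` embeddings. -/
lemma finrank_Vsig_self {θ : K} (hθ : Algebra.adjoin ℚ {θ} = ⊤) (σ : K →+* ℂ) :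
    finrank ℂ ↥(Vsig K K σ) = 1 := by
  have hpos : ∀ τ : K →+* ℂ, 1 ≤ finrank ℂ ↥(Vsig K K τ) := by
    intro τ
    rw [Nat.one_le_iff_ne_zero, Ne, Submodule.finrank_eq_zero]
    intro hbot
    have hle : ⨆ ρ : K →+* ℂ, Vsig K K ρ ≤ LinearMap.ker (evalSig τ).toLinearMap := by
      refine iSup_le fun ρ v hv => ?_
      by_cases hρ : ρ = τ
      · subst hρ
        rw [hbot, Submodule.mem_bot] at hv
        simp [hv]
      · have h1 := evalSig_actK τ θ v
        rw [(mem_Vsig K K).mp hv θ, map_smul, smul_eq_mul] at h1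
        have hne : ρ θ ≠ τ θ := fun h => hρ (embedding_injective hθ h)
        exact (mul_eq_mul_right_iff.mp h1).resolve_left hne
    rw [iSup_Vsig K hθ] at hle
    have h1 : evalSig τ 1 = 0 := hle (Submodule.mem_top (x := 1))
    simp at h1
  have hsum : ∑ τ : K →+* ℂ, finrank ℂ ↥(Vsig K K τ) = ∑ τ : K →+* ℂ, 1 := by
    rw [← finrank_iSup_of_iSupIndep _ (iSupIndep_Vsig K hθ), iSup_Vsig K hθ, finrank_top,
      finrank_baseChange, Finset.sum_const, Finset.card_univ, NumberField.Embeddings.card]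
    simp
  exact ((Finset.sum_eq_sum_iff_of_le fun τ _ => hpos τ).mp hsum.symm σ (Finset.mem_univ σ)).symm

/-! ### The complexification of `V''` as a kernel -/

/-- The operator `θ ⊗ 1 - 1 ⊗ θ̄` on `V_ℂ ⊗ K_ℂ`. -/
def diffOp (conj : K ≃ₐ[ℚ] K) (θ : K) : End ℂ ((ℂ ⊗[ℚ] V) ⊗[ℂ] (ℂ ⊗[ℚ] K)) :=
  TensorProduct.map (actK K V θ) LinearMap.id - TensorProduct.map LinearMap.id (actK K K (conj θ))

/-- The condition defining `V''` for all `x ∈ K` follows from the one for a generator `θ`. -/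
lemma Vdoubleprime_eq_ker (conj : K ≃ₐ[ℚ] K) {θ : K} (hθ : Algebra.adjoin ℚ {θ} = ⊤) :
    Vdoubleprime K conj V = LinearMap.ker (TensorProduct.map (smulQ K V θ) LinearMap.id -
      TensorProduct.map LinearMap.id (smulQ K K (conj θ))) := by
  refine le_antisymm (iInf_le _ θ) (le_iInf fun x w hw => ?_)
  simp only [LinearMap.mem_ker, LinearMap.sub_apply, sub_eq_zero] at hw ⊢
  -- `L x = x ⊗ 1` and `R x = 1 ⊗ x̄`.
  let L : K →ₐ[ℚ] End ℚ (V ⊗[ℚ] K) :=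
    (Module.End.rTensorAlgHom ℚ V K).comp (Algebra.lsmul ℚ ℚ V)
  let R : K →ₐ[ℚ] End ℚ (V ⊗[ℚ] K) :=
    ((Module.End.lTensorAlgHom ℚ K V).comp (Algebra.lsmul ℚ ℚ K)).comp conj.toAlgHom
  have hcomm : ∀ x y w, L x (R y w) = R y (L x w) := by
    intro x y w
    induction w with
    | zero => simp
    | add v w hv hw => simp only [map_add, hv, hw]
    | tmul v w => rfl
  change L x w = R x w
  refine adjoin_eq_top_induction (P := fun x => L x w = R x w) hθ hw ?_ ?_ ?_ x
  · intro q; rw [AlgHom.commutes, AlgHom.commutes]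
  · intro x y hx hy
    rw [map_add, map_add, LinearMap.add_apply, hx, hy, LinearMap.add_apply]
  · intro x y hx hy
    rw [map_mul, End.mul_apply, hy, hcomm, hx, mul_comm x y, map_mul, End.mul_apply]

/-- By flatness of `ℂ` over `ℚ`, the complexification of `V''` is the kernel of
`θ ⊗ 1 - 1 ⊗ θ̄` on `V_ℂ ⊗ K_ℂ`. -/
lemma map_baseChange_Vdoubleprime (conj : K ≃ₐ[ℚ] K) {θ : K}
    (hθ : Algebra.adjoin ℚ {θ} = ⊤) :
    Submodule.map
      (TensorProduct.AlgebraTensorModule.distribBaseChange ℚ ℂ V K :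
        (ℂ ⊗[ℚ] (V ⊗[ℚ] K)) →ₗ[ℂ] (ℂ ⊗[ℚ] V) ⊗[ℂ] (ℂ ⊗[ℚ] K))
      ((Vdoubleprime K conj V).baseChange ℂ) = LinearMap.ker (diffOp V conj θ) := by
  set g := TensorProduct.map (smulQ K V θ) LinearMap.id -
      TensorProduct.map LinearMap.id (smulQ K K (conj θ)) with hg
  set e := TensorProduct.AlgebraTensorModule.distribBaseChange ℚ ℂ V K
  have h1 : (Vdoubleprime K conj V).baseChange ℂ = LinearMap.ker (g.baseChange ℂ) := by
    rw [Vdoubleprime_eq_ker V conj hθ]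
    exact (Module.Flat.ker_lTensor_eq (S := ℂ) ℂ g).symm
  have h2 : diffOp V conj θ ∘ₗ e.toLinearMap = e.toLinearMap ∘ₗ g.baseChange ℂ := by
    ext v y
    simp [e, g, diffOp, actK]
  rw [h1]
  ext t
  obtain ⟨w, rfl⟩ := e.surjective t
  have h3 := LinearMap.congr_fun h2 w
  simp only [LinearMap.comp_apply, LinearEquiv.coe_coe] at h3
  rw [LinearMap.mem_ker, h3]
  simp [LinearMap.mem_ker]

/-! ### Hodge pieces as sums of tensor products of eigenspaces -/

variable (Vpq : ℕ → ℕ → Submodule ℂ (ℂ ⊗[ℚ] V))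

/-- The subspace `V^{p,q}_σ ⊗ K_τ` of `V_ℂ ⊗ K_ℂ`, with index `((p, q), σ, τ)`. -/
def block (i : (ℕ × ℕ) × (K →+* ℂ) × (K →+* ℂ)) :
    Submodule ℂ ((ℂ ⊗[ℚ] V) ⊗[ℂ] (ℂ ⊗[ℚ] K)) :=
  LinearMap.range (TensorProduct.mapIncl (Vpq i.1.1 i.1.2 ⊓ Vsig K V i.2.1) (Vsig K K i.2.2))

lemma range_mapIncl_le_eigenspace {θ : K} (A : Submodule ℂ (ℂ ⊗[ℚ] V)) (B : Submodule ℂ (ℂ ⊗[ℚ] K))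
    (σ : K →+* ℂ) (hA : A ≤ Vsig K V σ) :
    LinearMap.range (TensorProduct.mapIncl A B) ≤
      End.eigenspace (TensorProduct.map (actK K V θ) LinearMap.id) (σ θ) := by
  rw [TensorProduct.range_mapIncl, Submodule.map₂_le]
  intro m hm n hn
  rw [End.mem_eigenspace_iff, TensorProduct.mk_apply, TensorProduct.map_tmul,
    (mem_Vsig K V).mp (hA hm) θ, TensorProduct.smul_tmul']
  rfl

lemma block_le_eigenspace (conj : K ≃ₐ[ℚ] K) (θ : K)
    (i : (ℕ × ℕ) × (K →+* ℂ) × (K →+* ℂ)) :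
    block V Vpq i ≤ End.eigenspace (diffOp V conj θ) (i.2.1 θ - i.2.2 (conj θ)) := by
  rw [block, TensorProduct.range_mapIncl, Submodule.map₂_le]
  intro m hm n hn
  rw [End.mem_eigenspace_iff, TensorProduct.mk_apply, diffOp, LinearMap.sub_apply,
    TensorProduct.map_tmul, TensorProduct.map_tmul,
    (mem_Vsig K V).mp hm.2 θ, (mem_Vsig K K).mp hn (conj θ), sub_smul,
    TensorProduct.tmul_smul, TensorProduct.smul_tmul']
  rfl

lemma map₂_mk_eq_iSup_block [FiniteDimensional K V] {θ : K}
    (hθ : Algebra.adjoin ℚ {θ} = ⊤)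
    (hKst : ∀ (x : K) (p q : ℕ), Submodule.map (actK K V x) (Vpq p q) ≤ Vpq p q)
    (p q : ℕ) (T : Set (K →+* ℂ)) :
    Submodule.map₂ (TensorProduct.mk ℂ _ _) (Vpq p q) (⨆ τ ∈ T, Vsig K K τ) =
      ⨆ (σ : K →+* ℂ), ⨆ τ ∈ T, block V Vpq ((p, q), σ, τ) := by
  simp only [block, TensorProduct.range_mapIncl]
  conv_lhs => rw [iSup_Vsig_inf V hθ (Vpq p q)
    (fun v hv => hKst θ p q (Submodule.mem_map_of_mem hv))]
  simp only [Submodule.map₂_iSup_left]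
  simp only [Submodule.map₂_iSup_right]

/-- The embeddings occurring in `(K_{-1/2})^{p,q}`. -/
def KnegHalfSet (Sg : Set (K →+* ℂ)) (p q : ℕ) : Set (K →+* ℂ) :=
  {τ | (p = 1 ∧ q = 0 ∧ τ ∈ Sg) ∨ (p = 0 ∧ q = 1 ∧ (starRingEnd ℂ).comp τ ∈ Sg)}

lemma KnegHalf_eq (Sg : Set (K →+* ℂ)) (p q : ℕ) :
    KnegHalf K Sg p q = ⨆ τ ∈ KnegHalfSet Sg p q, Vsig K K τ := by
  unfold KnegHalf KnegHalfSet
  split_ifs with h1 h2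
  · obtain ⟨rfl, rfl⟩ := h1; simp
  · obtain ⟨rfl, rfl⟩ := h2; simp
  · symm
    rw [eq_bot_iff]
    refine iSup₂_le fun τ hτ => ?_
    rcases hτ with h | h
    · exact absurd ⟨h.1, h.2.1⟩ h1
    · exact absurd ⟨h.1, h.2.1⟩ h2

/-- The indices of the blocks contained in the `(r,s)`-piece of `V ⊗ K_{-1/2}`. -/
def pieceSet (Sg : Set (K →+* ℂ)) (r s : ℕ) : Set ((ℕ × ℕ) × (K →+* ℂ) × (K →+* ℂ)) :=
  {i | (i.2.2 ∈ Sg ∧ i.1.1 + 1 = r ∧ i.1.2 = s) ∨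
    ((starRingEnd ℂ).comp i.2.2 ∈ Sg ∧ i.1.1 = r ∧ i.1.2 + 1 = s)}

lemma tensorPiece_eq [FiniteDimensional K V] {θ : K} (hθ : Algebra.adjoin ℚ {θ} = ⊤)
    (hKst : ∀ (x : K) (p q : ℕ), Submodule.map (actK K V x) (Vpq p q) ≤ Vpq p q)
    (Sg : Set (K →+* ℂ)) (r s : ℕ) :
    tensorPiece K V Vpq Sg r s = ⨆ i ∈ pieceSet Sg r s, block V Vpq i := by
  simp only [tensorPiece, TensorProduct.range_mapIncl, KnegHalf_eq,
    map₂_mk_eq_iSup_block V Vpq hθ hKst]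
  apply le_antisymm
  · simp only [iSup_le_iff]
    intro p q p' q' hr hs σ τ hτ
    refine le_iSup₂_of_le ((p, q), σ, τ) ?_ le_rfl
    rcases hτ with ⟨rfl, rfl, h⟩ | ⟨rfl, rfl, h⟩
    · exact Or.inl ⟨h, hr, hs⟩
    · exact Or.inr ⟨h, hr, hs⟩
  · refine iSup₂_le ?_
    rintro ⟨⟨p, q⟩, σ, τ⟩ (⟨h, hr, hs⟩ | ⟨h, hr, hs⟩)
    · refine le_iSup₂_of_le p q <| le_iSup₂_of_le 1 0 <| le_iSup₂_of_le hr hs <|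
        le_iSup_of_le σ <| le_iSup₂_of_le τ ?_ le_rfl
      exact Or.inl ⟨rfl, rfl, h⟩
    · refine le_iSup₂_of_le p q <| le_iSup₂_of_le 0 1 <| le_iSup₂_of_le hr hs <|
        le_iSup_of_le σ <| le_iSup₂_of_le τ ?_ le_rfl
      exact Or.inr ⟨rfl, rfl, h⟩

lemma iSup_block [FiniteDimensional K V] {θ : K} (hθ : Algebra.adjoin ℚ {θ} = ⊤)
    (hKst : ∀ (x : K) (p q : ℕ), Submodule.map (actK K V x) (Vpq p q) ≤ Vpq p q)
    (htop : ⨆ pq : ℕ × ℕ, Vpq pq.1 pq.2 = ⊤) :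
    ⨆ i : (ℕ × ℕ) × (K →+* ℂ) × (K →+* ℂ), block V Vpq i = ⊤ := by
  have h : ∀ pq : ℕ × ℕ, Submodule.map₂ (TensorProduct.mk ℂ _ _) (Vpq pq.1 pq.2) ⊤ =
      ⨆ (σ : K →+* ℂ) (τ : K →+* ℂ), block V Vpq (pq, σ, τ) := by
    intro pq
    have := map₂_mk_eq_iSup_block V Vpq hθ hKst pq.1 pq.2 Set.univ
    simpa [iSup_Vsig K hθ] using this
  simp only [iSup_prod (f := block V Vpq), iSup_prod (β := K →+* ℂ) (γ := K →+* ℂ), ← h]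
  rw [← Submodule.map₂_iSup_left, htop, TensorProduct.map₂_mk_top_top_eq_top]

lemma exists_adjoin_eq_top (K : Type*) [Field K] [NumberField K] :
    ∃ θ : K, Algebra.adjoin ℚ {θ} = ⊤ := by
  obtain ⟨θ, hθ⟩ := Field.exists_primitive_element ℚ K
  refine ⟨θ, ?_⟩
  rw [← IntermediateField.adjoin_simple_toSubalgebra_of_isAlgebraic
    (Algebra.IsAlgebraic.isAlgebraic θ), hθ, IntermediateField.top_toSubalgebra]

lemma conj_comp_conj_comp (σ : K →+* ℂ) :
    (starRingEnd ℂ).comp ((starRingEnd ℂ).comp σ) = σ := by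
  ext x; simp

lemma VdoubleprimePiece_eq (Sg : Set (K →+* ℂ)) (r s : ℕ) :
    VdoubleprimePiece K V Vpq Sg r s =
      ⨆ i ∈ {i | i ∈ pieceSet Sg r s ∧ i.2.2 = (starRingEnd ℂ).comp i.2.1}, block V Vpq i := by
  apply le_antisymm
  · refine sup_le ?_ ?_
    · split_ifs with hs
      · exact bot_le
      · refine iSup₂_le fun σ hσ =>
          le_iSup₂_of_le ((r, s - 1), σ, (starRingEnd ℂ).comp σ) ⟨Or.inr ⟨?_, rfl, ?_⟩, rfl⟩ le_rfl
        · simpa only [conj_comp_conj_comp] using hσ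
        · change s - 1 + 1 = s; omega
    · split_ifs with hr
      · exact bot_le
      · refine iSup₂_le fun σ hσ =>
          le_iSup₂_of_le ((r - 1, s), σ, (starRingEnd ℂ).comp σ) ⟨Or.inl ⟨hσ, ?_, rfl⟩, rfl⟩ le_rfl
        change r - 1 + 1 = r; omega
  · refine iSup₂_le ?_
    rintro ⟨⟨p, q⟩, σ, τ⟩ ⟨⟨h, rfl, rfl⟩ | ⟨h, rfl, rfl⟩, hτ⟩
    · obtain rfl : τ = (starRingEnd ℂ).comp σ := hτ
      refine le_sup_of_le_right ?_
      rw [if_neg (Nat.succ_ne_zero _)]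
      exact le_iSup₂_of_le (f := fun σ _ => _) σ h le_rfl
    · obtain rfl : τ = (starRingEnd ℂ).comp σ := hτ
      refine le_sup_of_le_left ?_
      rw [if_neg (Nat.succ_ne_zero _)]
      simp only [conj_comp_conj_comp] at h
      exact le_iSup₂_of_le (f := fun σ _ => _) σ h le_rfl

open Classical in
/-- The summands of the `(r,s)`-piece, one for each embedding `σ`, are independent because they lie
in distinct eigenspaces of `θ ⊗ 1`, and tensoring with the line `K_{σ̄}` preserves dimensions. -/
lemma finrank_VdoubleprimePiece [FiniteDimensional K V] {θ : K}
    (hθ : Algebra.adjoin ℚ {θ} = ⊤) (Sg : Set (K →+* ℂ))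
    (hSg : ∀ σ : K →+* ℂ, Xor' (σ ∈ Sg) ((starRingEnd ℂ).comp σ ∈ Sg)) (r s : ℕ) :
    finrank ℂ ↥(VdoubleprimePiece K V Vpq Sg r s) =
      finrank ℂ ↥(if s = 0 then (⊥ : Submodule ℂ (ℂ ⊗[ℚ] V))
        else VpqT K V Vpq Sg r (s - 1)) +
      finrank ℂ ↥(if r = 0 then (⊥ : Submodule ℂ (ℂ ⊗[ℚ] V))
        else VpqT K V Vpq {σ : K →+* ℂ | (starRingEnd ℂ).comp σ ∈ Sg} (r - 1) s) := by
  have : Module.Finite ℚ V := Module.Finite.trans K V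
  -- `A σ` and `B σ` are the contributions of `σ` to the two Hodge numbers; since `Sg` is a CM-type,
  -- at most one of them is nonzero.
  let A : (K →+* ℂ) → Submodule ℂ (ℂ ⊗[ℚ] V) := fun σ =>
    if s ≠ 0 ∧ σ ∈ Sg then Vpq r (s - 1) ⊓ Vsig K V σ else ⊥
  let B : (K →+* ℂ) → Submodule ℂ (ℂ ⊗[ℚ] V) := fun σ =>
    if r ≠ 0 ∧ (starRingEnd ℂ).comp σ ∈ Sg then Vpq (r - 1) s ⊓ Vsig K V σ else ⊥
  have hAle : ∀ σ, A σ ≤ Vsig K V σ := by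
    intro σ; simp only [A]; split_ifs
    exacts [inf_le_right, bot_le]
  have hBle : ∀ σ, B σ ≤ Vsig K V σ := by
    intro σ; simp only [B]; split_ifs
    exacts [inf_le_right, bot_le]
  have hA : (if s = 0 then (⊥ : Submodule ℂ (ℂ ⊗[ℚ] V)) else VpqT K V Vpq Sg r (s - 1)) =
      ⨆ σ, A σ := by
    by_cases hs : s = 0
    · simp [A, hs]
    · simp only [A, hs, VpqT, if_false, ne_eq, not_false_eq_true, true_and]
      refine iSup_congr fun σ => ?_
      by_cases h : σ ∈ Sg <;> simp [h]
  have hB : (if r = 0 then (⊥ : Submodule ℂ (ℂ ⊗[ℚ] V))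
      else VpqT K V Vpq {σ : K →+* ℂ | (starRingEnd ℂ).comp σ ∈ Sg} (r - 1) s) = ⨆ σ, B σ := by
    by_cases hr : r = 0
    · simp [B, hr]
    · simp only [B, hr, VpqT, if_false, ne_eq, not_false_eq_true, true_and]
      refine iSup_congr fun σ => ?_
      by_cases h : (starRingEnd ℂ).comp σ ∈ Sg <;> simp [h]
  have hAB : VdoubleprimePiece K V Vpq Sg r s =
      ⨆ σ, LinearMap.range (TensorProduct.mapIncl (A σ ⊔ B σ)
        (Vsig K K ((starRingEnd ℂ).comp σ))) := by
    simp only [VdoubleprimePiece, TensorProduct.range_mapIncl, Submodule.map₂_sup_left,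
      iSup_sup_eq]
    congr 1
    · by_cases hs : s = 0
      · simp [A, hs]
      · simp only [A, hs, if_false, ne_eq, not_false_eq_true, true_and]
        refine iSup_congr fun σ => ?_
        by_cases h : σ ∈ Sg <;> simp [h]
    · by_cases hr : r = 0
      · simp [B, hr]
      · simp only [B, hr, if_false, ne_eq, not_false_eq_true, true_and]
        refine iSup_congr fun σ => ?_
        by_cases h : (starRingEnd ℂ).comp σ ∈ Sg <;> simp [h]
  have hind : iSupIndep fun σ : K →+* ℂ => LinearMap.range (TensorProduct.mapIncl (A σ ⊔ B σ)
      (Vsig K K ((starRingEnd ℂ).comp σ))) :=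
    ((End.eigenspaces_iSupIndep _).comp (embedding_injective hθ)).mono fun σ =>
      range_mapIncl_le_eigenspace V (θ := θ) _ _ σ (sup_le (hAle σ) (hBle σ))
  rw [hA, hB, hAB, finrank_iSup_of_iSupIndep _ hind,
    finrank_iSup_of_iSupIndep _ ((iSupIndep_Vsig V hθ).mono hAle),
    finrank_iSup_of_iSupIndep _ ((iSupIndep_Vsig V hθ).mono hBle), ← Finset.sum_add_distrib]
  refine Finset.sum_congr rfl fun σ _ => ?_
  rw [finrank_range_mapIncl, finrank_Vsig_self hθ, mul_one]
  rcases hSg σ with ⟨_, h⟩ | ⟨_, h⟩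
  · have hz : B σ = ⊥ := by simp [B, h]
    rw [hz, sup_bot_eq, finrank_bot, add_zero]
  · have hz : A σ = ⊥ := by simp [A, h]
    rw [hz, bot_sup_eq, finrank_bot, zero_add]

end Eigen

/-- `V''` is a sub-Hodge structure of `V ⊗_ℚ K_{-1/2}` (of weight
`k+1`), its induced Hodge decomposition is
`(V'')^{r,s} = (⊕_{σ∈Σ} V^{r,s-1}_σ ⊗ K_{σ̄}) ⊕ (⊕_{σ∈Σ̄} V^{r-1,s}_σ ⊗ K_{σ̄})`,
and in particular `dim_ℂ (V'')^{r,s} = dim_ℂ V^{r,s-1}_Σ + dim_ℂ V^{r-1,s}_{Σ̄}`,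
which are the Hodge numbers of the Tate twist `V_{1/2}(-1)` of the half twist. -/
theorem Vdoubleprime_is_subHodge_of_V_tensor_KnegHalf
    -- `K` is a CM field:
    (K : Type*) [Field K] [NumberField K]
    (conj : K ≃ₐ[ℚ] K) (hconj : ∀ (σ : K →+* ℂ) (x : K), σ (conj x) = starRingEnd ℂ (σ x))
    (hconj_ne : conj ≠ AlgEquiv.refl)
    -- `Σ` is a CM-type of `K`:
    (Sg : Set (K →+* ℂ))
    (hSg : ∀ σ : K →+* ℂ, Xor' (σ ∈ Sg) ((starRingEnd ℂ).comp σ ∈ Sg))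
    -- `V` is a rational Hodge structure of weight `k`, of CM-type with field `K`:
    (V : Type*) [AddCommGroup V] [Module ℚ V] [Module K V] [IsScalarTower ℚ K V]
    [FiniteDimensional K V]
    (k : ℕ) (Vpq : ℕ → ℕ → Submodule ℂ (ℂ ⊗[ℚ] V))
    (hbot : ∀ p q, p + q ≠ k → Vpq p q = ⊥)
    (hint : DirectSum.IsInternal (fun pq : ℕ × ℕ => Vpq pq.1 pq.2))
    (hcon : ∀ p q, Submodule.map (cmap V) ((Vpq p q).restrictScalars ℚ) =
      (Vpq q p).restrictScalars ℚ)
    (hKst : ∀ (x : K) (p q : ℕ), Submodule.map (actK K V x) (Vpq p q) ≤ Vpq p q) :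
    -- the image of the complexification of `V'` in `V_ℂ ⊗_ℂ (K ⊗_ℚ ℂ)`:
    let U : Submodule ℂ ((ℂ ⊗[ℚ] V) ⊗[ℂ] (ℂ ⊗[ℚ] K)) :=
      Submodule.map
        (TensorProduct.AlgebraTensorModule.distribBaseChange ℚ ℂ V K :
          (ℂ ⊗[ℚ] (V ⊗[ℚ] K)) →ₗ[ℂ] (ℂ ⊗[ℚ] V) ⊗[ℂ] (ℂ ⊗[ℚ] K))
        ((Vdoubleprime K conj V).baseChange ℂ)
    -- `V'` is a sub-Hodge structure: its complexification is the direct sum of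
    -- its intersections with the Hodge summands of `V ⊗ K_{-1/2}`:
    (U = ⨆ rs : ℕ × ℕ, (U ⊓ tensorPiece K V Vpq Sg rs.1 rs.2)) ∧
    -- the induced Hodge decomposition of `V'`:
    (∀ r s : ℕ, U ⊓ tensorPiece K V Vpq Sg r s = VdoubleprimePiece K V Vpq Sg r s) ∧
    -- in particular the Hodge numbers are those of the negative half twist `V_{-1/2}`:
    (∀ r s : ℕ,
      finrank ℂ ↥(U ⊓ tensorPiece K V Vpq Sg r s) =
        finrank ℂ ↥(if s = 0 then (⊥ : Submodule ℂ (ℂ ⊗[ℚ] V))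
          else VpqT K V Vpq Sg r (s - 1)) +
        finrank ℂ ↥(if r = 0 then (⊥ : Submodule ℂ (ℂ ⊗[ℚ] V))
          else VpqT K V Vpq {σ : K →+* ℂ | (starRingEnd ℂ).comp σ ∈ Sg} (r - 1) s)) := by
  intro U
  obtain ⟨θ, hθ⟩ := exists_adjoin_eq_top K
  have hU : U = LinearMap.ker (diffOp V conj θ) := map_baseChange_Vdoubleprime V conj hθ
  have hc : ∀ i : (ℕ × ℕ) × (K →+* ℂ) × (K →+* ℂ),
      i.2.1 θ - i.2.2 (conj θ) = 0 ↔ i.2.2 = (starRingEnd ℂ).comp i.2.1 := by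
    rintro ⟨pq, σ, τ⟩
    change σ θ - τ (conj θ) = 0 ↔ τ = (starRingEnd ℂ).comp σ
    rw [sub_eq_zero, hconj]
    constructor
    · intro h
      refine embedding_injective hθ ?_
      simp [h]
    · rintro rfl; simp
  have hinf : ∀ S : Set ((ℕ × ℕ) × (K →+* ℂ) × (K →+* ℂ)),
      U ⊓ ⨆ i ∈ S, block V Vpq i =
        ⨆ i ∈ {i | i ∈ S ∧ i.2.2 = (starRingEnd ℂ).comp i.2.1}, block V Vpq i := by
    intro S
    rw [hU, ker_inf_biSup_eq _ _ _ (block_le_eigenspace V Vpq conj θ) S]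
    simp only [hc]
  have hpiece : ∀ r s : ℕ,
      U ⊓ tensorPiece K V Vpq Sg r s = VdoubleprimePiece K V Vpq Sg r s := by
    intro r s
    rw [tensorPiece_eq V Vpq hθ hKst, hinf, VdoubleprimePiece_eq]
  refine ⟨?_, hpiece, fun r s => ?_⟩
  · refine le_antisymm ?_ (iSup_le fun _ => inf_le_left)
    have htop := hinf Set.univ
    simp only [Set.mem_univ, iSup_pos, true_and,
      iSup_block V Vpq hθ hKst hint.submodule_iSup_eq_top, inf_top_eq] at htop
    conv_lhs => rw [htop]
    refine iSup₂_le ?_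
    rintro ⟨⟨p, q⟩, σ, τ⟩ hτ
    simp only [hpiece, VdoubleprimePiece_eq]
    rcases hSg τ with ⟨h, _⟩ | ⟨h, _⟩
    · exact le_iSup_of_le (p + 1, q) (le_iSup₂_of_le (f := fun i _ => _)
        ((p, q), σ, τ) ⟨Or.inl ⟨h, rfl, rfl⟩, hτ⟩ le_rfl)
    · exact le_iSup_of_le (p, q + 1) (le_iSup₂_of_le (f := fun i _ => _)
        ((p, q), σ, τ) ⟨Or.inr ⟨h, rfl, rfl⟩, hτ⟩ le_rfl)
  · rw [hpiece]
    exact finrank_VdoubleprimePiece V Vpq hθ Sg hSg r s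
end
end

section
/- Let k be a field of characteristic zero, m ≥ 1, and Q the quadratic form on k^{2m} given by Q(y) = Σ_{i=1}^m y_i·y_{m+i}. In the Clifford algebra C(Q) set f := ι(b_{m+1})⋯ι(b_{2m}) and h := ι(b₁)⋯ι(b_m). Then right multiplication by h maps the left ideal C(Q)·f into C(Q)·h, right multiplication by f maps C(Q)·h into C(Q)·f, and both composites x ↦ (x·h)·f on C(Q)·f and x ↦ (x·f)·h on C(Q)·h equal (-1)^{m(m-1)/2} times the identity; in particular right multiplication by h is a k-linear bijection from C(Q)·f onto C(Q)·h. -/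
/-!
Put `aᵢ = ι(bᵢ)` and `cᵢ = ι(b_{m+i})`. These generators satisfy `cᵢ aᵢ + aᵢ cᵢ = 1`,
`aᵢ² = cᵢ² = 0`, and generators with different indices anticommute; in particular
`aᵢ cᵢ aᵢ = aᵢ` and `cᵢ aᵢ cᵢ = cᵢ`. The whole theorem follows from the two identities
`f h f = ε f` and `h f h = ε h` with `ε = (-1)^{m(m-1)/2}`, which are instances of
`prod_mul_prod_mul_prod`. That lemma is an induction on the number `n` of factors: writing
`f = c f₁`, `h = a h₁`, moving `a` and `c` to the left in `c f₁ a h₁ c f₁` costs the sign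
`(-1)^{3n} = (-1)^n` and produces `(c a c)(f₁ h₁ f₁) = c (f₁ h₁ f₁)`.
-/

noncomputable section

/-- The hyperbolic quadratic form `Q(y) = Σ_{i=1}^m y_i·y_{m+i}` on `k^{2m}`,
where the coordinates are indexed by `Fin m ⊕ Fin m` (the first `m`
coordinates by `Sum.inl`, the last `m` by `Sum.inr`). -/
def hypQ (k : Type*) [Field k] (m : ℕ) : QuadraticForm k ((Fin m ⊕ Fin m) → k) :=
  (∑ i : Fin m,
    (LinearMap.mul k k).compl₁₂ (LinearMap.proj (Sum.inl i)) (LinearMap.proj (Sum.inr i))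
      : LinearMap.BilinMap k ((Fin m ⊕ Fin m) → k) k).toQuadraticMap

/-- `f := ι(b_{m+1})·ι(b_{m+2})⋯ι(b_{2m})` in the Clifford algebra of `hypQ`. -/
def cliffF (k : Type*) [Field k] (m : ℕ) : CliffordAlgebra (hypQ k m) :=
  ((List.finRange m).map fun i =>
    CliffordAlgebra.ι (hypQ k m) (Pi.single (Sum.inr i) (1 : k))).prod

/-- `h := ι(b₁)·ι(b₂)⋯ι(b_m)` in the Clifford algebra of `hypQ`. -/
def cliffH (k : Type*) [Field k] (m : ℕ) : CliffordAlgebra (hypQ k m) :=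
  ((List.finRange m).map fun i =>
    CliffordAlgebra.ι (hypQ k m) (Pi.single (Sum.inl i) (1 : k))).prod


/-- Moving `x` to the left past a product of elements anticommuting with it costs one sign
per factor. -/
lemma prod_mul_of_anticomm {A ι : Type*} [Ring A] (u : ι → A) (x : A) (l : List ι)
    (hx : ∀ j ∈ l, u j * x = -(x * u j)) :
    (l.map u).prod * x = (-1) ^ l.length * (x * (l.map u).prod) := by
  induction l with
  | nil => simp
  | cons j l ih =>
    have h1 := hx j (by simp)
    have h2 := ih fun i hi => hx i (by simp [hi])
    have h3 : u j * (-1) ^ l.length = (-1) ^ l.length * u j :=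
      ((Commute.neg_one_right (u j)).pow_right l.length).eq
    simp only [List.map_cons, List.prod_cons, List.length_cons]
    rw [mul_assoc, h2, ← mul_assoc, h3, mul_assoc, ← mul_assoc (u j), h1, pow_succ]
    noncomm_ring

/-- If `u i * v i * u i = u i` and elements with different indices anticommute, the products
`U = ∏ u`, `V = ∏ v` over a list of `n` distinct indices satisfy
`U * V * U = (-1) ^ (n * (n - 1) / 2) * U`. -/
lemma prod_mul_prod_mul_prod {A ι : Type*} [Ring A] (u v : ι → A)
    (huu : ∀ i j, i ≠ j → u i * u j = -(u j * u i))
    (huv : ∀ i j, i ≠ j → u i * v j = -(v j * u i))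
    (huvu : ∀ i, u i * v i * u i = u i) (l : List ι) (hl : l.Nodup) :
    (l.map u).prod * (l.map v).prod * (l.map u).prod =
      (-1) ^ (l.length * (l.length - 1) / 2) * (l.map u).prod := by
  induction l with
  | nil => simp
  | cons i l ih =>
    obtain ⟨hi, hl⟩ := List.nodup_cons.mp hl
    have ih := ih hl
    have hne : ∀ j ∈ l, j ≠ i := fun j hj h => hi (h ▸ hj)
    have h1 := prod_mul_of_anticomm u (v i) l fun j hj => huv j i (hne j hj)
    have h2 := prod_mul_of_anticomm u (u i) l fun j hj => huu j i (hne j hj)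
    have h3 := prod_mul_of_anticomm v (u i) l fun j hj => by
      rw [huv i j (hne j hj).symm, neg_neg]
    have hexp : (l.length + 1) * (l.length + 1 - 1) / 2
        = l.length + l.length * (l.length - 1) / 2 := by
      rw [← Finset.sum_range_id_mul_two, ← Finset.sum_range_id_mul_two,
        Nat.mul_div_cancel _ two_pos, Nat.mul_div_cancel _ two_pos, Finset.sum_range_succ,
        add_comm]
    simp only [List.map_cons, List.prod_cons, List.length_cons]
    rw [hexp, pow_add]
    generalize (l.map u).prod = U at *
    generalize (l.map v).prod = V at *
    generalize l.length * (l.length - 1) / 2 = e at *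
    rcases neg_one_pow_eq_or A l.length with hs | hs <;>
    rcases neg_one_pow_eq_or A e with he | he <;>
    rw [hs] at h1 h2 h3 <;> rw [he] at ih <;> rw [hs, he] <;>
    simp only [one_mul, neg_mul, neg_neg, mul_neg] at * <;>
    · have key : u i * U * (v i * V) * (u i * U) = u i * (U * v i) * (V * u i) * U := by
        simp only [mul_assoc]
      have key2 : u i * (v i * U) * (u i * V) * U = u i * v i * (U * u i) * V * U := by
        simp only [mul_assoc]
      have key3 : u i * v i * (u i * U) * V * U = (u i * v i * u i) * (U * V * U) := by
        simp only [mul_assoc]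
      simp only [key, key2, key3, h1, h2, h3, huvu, ih, neg_mul, mul_neg, neg_neg]

lemma hypQ_apply (k : Type*) [Field k] (m : ℕ) (y : (Fin m ⊕ Fin m) → k) :
    hypQ k m y = ∑ i, y (Sum.inl i) * y (Sum.inr i) := by
  simp [hypQ, LinearMap.BilinMap.toQuadraticMap_apply]

lemma hypQ_polar (k : Type*) [Field k] (m : ℕ) (y z : (Fin m ⊕ Fin m) → k) :
    QuadraticMap.polar (hypQ k m) y z =
      ∑ i, (y (Sum.inl i) * z (Sum.inr i) + z (Sum.inl i) * y (Sum.inr i)) := by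
  simp only [QuadraticMap.polar, hypQ_apply, ← Finset.sum_sub_distrib, Pi.add_apply]
  exact Finset.sum_congr rfl fun i _ => by ring

lemma anticomm_of_polar_eq_zero (k : Type*) [Field k] (m : ℕ) (y z : (Fin m ⊕ Fin m) → k)
    (h : QuadraticMap.polar (hypQ k m) y z = 0) :
    CliffordAlgebra.ι (hypQ k m) y * CliffordAlgebra.ι (hypQ k m) z =
      -(CliffordAlgebra.ι (hypQ k m) z * CliffordAlgebra.ι (hypQ k m) y) := by
  rw [eq_neg_iff_add_eq_zero, CliffordAlgebra.ι_mul_ι_add_swap, h, map_zero]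

/-- For an isotropic `y` and any `z` with polar pairing `1`, the Clifford relations give
`y z y = y (1 - y z) = y`. -/
lemma mul_mul_self_of_polar_eq_one (k : Type*) [Field k] (m : ℕ) (y z : (Fin m ⊕ Fin m) → k)
    (hy : hypQ k m y = 0) (h : QuadraticMap.polar (hypQ k m) y z = 1) :
    CliffordAlgebra.ι (hypQ k m) y * CliffordAlgebra.ι (hypQ k m) z *
      CliffordAlgebra.ι (hypQ k m) y = CliffordAlgebra.ι (hypQ k m) y := by
  have h1 := CliffordAlgebra.ι_mul_ι_add_swap (Q := hypQ k m) y z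
  have h2 := CliffordAlgebra.ι_sq_scalar (hypQ k m) y
  rw [h, map_one] at h1
  rw [hy, map_zero] at h2
  rw [mul_assoc, eq_sub_of_add_eq' h1, mul_sub, ← mul_assoc, h2, mul_one, zero_mul, sub_zero]

lemma cliffF_mul_cliffH_mul_cliffF (k : Type*) [Field k] (m : ℕ) :
    cliffF k m * cliffH k m * cliffF k m = ((-1 : k) ^ (m * (m - 1) / 2)) • cliffF k m := by
  have := prod_mul_prod_mul_prod
    (fun i : Fin m => CliffordAlgebra.ι (hypQ k m) (Pi.single (Sum.inr i) (1 : k)))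
    (fun i : Fin m => CliffordAlgebra.ι (hypQ k m) (Pi.single (Sum.inl i) (1 : k)))
    (fun i j hij => anticomm_of_polar_eq_zero _ _ _ _ (by simp [hypQ_polar]))
    (fun i j hij => anticomm_of_polar_eq_zero _ _ _ _ (by
      simp [hypQ_polar, Pi.single_apply, hij]))
    (fun i => mul_mul_self_of_polar_eq_one _ _ _ _ (by simp [hypQ_apply])
      (by simp [hypQ_polar, Pi.single_apply]))
    (List.finRange m) (List.nodup_finRange m)
  rw [List.length_finRange] at this
  rw [Algebra.smul_def, map_pow, map_neg, map_one]
  exact this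

lemma cliffH_mul_cliffF_mul_cliffH (k : Type*) [Field k] (m : ℕ) :
    cliffH k m * cliffF k m * cliffH k m = ((-1 : k) ^ (m * (m - 1) / 2)) • cliffH k m := by
  have := prod_mul_prod_mul_prod
    (fun i : Fin m => CliffordAlgebra.ι (hypQ k m) (Pi.single (Sum.inl i) (1 : k)))
    (fun i : Fin m => CliffordAlgebra.ι (hypQ k m) (Pi.single (Sum.inr i) (1 : k)))
    (fun i j hij => anticomm_of_polar_eq_zero _ _ _ _ (by simp [hypQ_polar]))
    (fun i j hij => anticomm_of_polar_eq_zero _ _ _ _ (by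
      simp [hypQ_polar, Pi.single_apply, hij.symm]))
    (fun i => mul_mul_self_of_polar_eq_one _ _ _ _ (by simp [hypQ_apply])
      (by simp [hypQ_polar, Pi.single_apply]))
    (List.finRange m) (List.nodup_finRange m)
  rw [List.length_finRange] at this
  rw [Algebra.smul_def, map_pow, map_neg, map_one]
  exact this

/-- in the Clifford algebra of the hyperbolic form
`Q(y) = Σ y_i y_{m+i}` on `k^{2m}`, right multiplication by `h` maps the left
ideal `C(Q)·f` into `C(Q)·h`, right multiplication by `f` maps `C(Q)·h` into
`C(Q)·f`, the two composites are `(-1)^{m(m-1)/2}` times the identity, and in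
particular right multiplication by `h` is a `k`-linear bijection
`C(Q)·f → C(Q)·h`. -/
theorem cliff_right_mul_bijection (k : Type*) [Field k] [CharZero k] (m : ℕ) (hm : 1 ≤ m) :
    (∀ x ∈ LinearMap.range (LinearMap.mulRight k (cliffF k m)),
      x * cliffH k m ∈ LinearMap.range (LinearMap.mulRight k (cliffH k m))) ∧
    (∀ x ∈ LinearMap.range (LinearMap.mulRight k (cliffH k m)),
      x * cliffF k m ∈ LinearMap.range (LinearMap.mulRight k (cliffF k m))) ∧
    (∀ x ∈ LinearMap.range (LinearMap.mulRight k (cliffF k m)),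
      (x * cliffH k m) * cliffF k m = ((-1 : k) ^ (m * (m - 1) / 2)) • x) ∧
    (∀ x ∈ LinearMap.range (LinearMap.mulRight k (cliffH k m)),
      (x * cliffF k m) * cliffH k m = ((-1 : k) ^ (m * (m - 1) / 2)) • x) ∧
    (∃ e : LinearMap.range (LinearMap.mulRight k (cliffF k m)) ≃ₗ[k]
        LinearMap.range (LinearMap.mulRight k (cliffH k m)),
      ∀ x : LinearMap.range (LinearMap.mulRight k (cliffF k m)),
        (e x : CliffordAlgebra (hypQ k m)) = (x : CliffordAlgebra (hypQ k m)) * cliffH k m) := by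
  have hF : ∀ x ∈ LinearMap.range (LinearMap.mulRight k (cliffF k m)),
      x * cliffH k m * cliffF k m = ((-1 : k) ^ (m * (m - 1) / 2)) • x := by
    rintro _ ⟨y, rfl⟩
    rw [LinearMap.mulRight_apply, mul_assoc, mul_assoc, ← mul_assoc (cliffF k m),
      cliffF_mul_cliffH_mul_cliffF, mul_smul_comm]
  have hH : ∀ x ∈ LinearMap.range (LinearMap.mulRight k (cliffH k m)),
      x * cliffF k m * cliffH k m = ((-1 : k) ^ (m * (m - 1) / 2)) • x := by
    rintro _ ⟨y, rfl⟩
    rw [LinearMap.mulRight_apply, mul_assoc, mul_assoc, ← mul_assoc (cliffH k m),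
      cliffH_mul_cliffF_mul_cliffH, mul_smul_comm]
  have hε : (-1 : k) ^ (m * (m - 1) / 2) * (-1 : k) ^ (m * (m - 1) / 2) = 1 := by
    rw [← mul_pow]; simp
  refine ⟨fun x _ => ⟨x, rfl⟩, fun x _ => ⟨x, rfl⟩, hF, hH, ?_⟩
  -- As `ε² = 1`, the inverse of right multiplication by `h` is `ε` times that by `f`.
  refine ⟨LinearEquiv.ofLinearMap
    (((LinearMap.mulRight k (cliffH k m)).domRestrict
        (LinearMap.range (LinearMap.mulRight k (cliffF k m)))).codRestrict
        (LinearMap.range (LinearMap.mulRight k (cliffH k m))) fun x => ⟨x, rfl⟩)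
    ((-1 : k) ^ (m * (m - 1) / 2) •
      ((LinearMap.mulRight k (cliffF k m)).domRestrict
        (LinearMap.range (LinearMap.mulRight k (cliffH k m)))).codRestrict
        (LinearMap.range (LinearMap.mulRight k (cliffF k m))) fun x => ⟨x, rfl⟩)
    ?_ ?_, fun x => rfl⟩
  · ext x
    change ((-1 : k) ^ (m * (m - 1) / 2) • ((x : CliffordAlgebra (hypQ k m)) * cliffF k m)) *
      cliffH k m = x
    rw [smul_mul_assoc, hH x x.2, smul_smul, hε, one_smul]
  · ext x
    change (-1 : k) ^ (m * (m - 1) / 2) • (((x : CliffordAlgebra (hypQ k m)) * cliffH k m) *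
      cliffF k m) = x
    rw [hF x x.2, smul_smul, hε, one_smul]
end
end
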